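/- Assume (A1) r has all coordinates strictly positive and (A2) M_{ij} ≤ 0 for all i ≠ j, where M = XᵀX and r = Xᵀy. For η > 0 and ε ∈ (0,1], let τ_η^{(ε)} = inf{ t ≥ 0 : ‖θ^{(ε)}(t) − M⁻¹r‖ ≤ η } be the hitting time of the Euclidean ball of radius η around the global minimizer M⁻¹r of f. Then there exists η₀ > 0 such that for every η ∈ (0, η₀], τ_η^{(ε)} / log(1/ε) → max_{i ∈ {1,…,d}} (M⁻¹k)_i / (M⁻¹r)_i as ε → 0. -/

import Mathlib

open Matrix

/-!
Write `N = M⁻¹`, `S = N r` and `L = log (1 / ε)`. The matrix `M` is an M-matrix, so `N` has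
nonnegative entries. Dividing the ODE by `θᵢ`, integrating and applying `N` gives the identity
`∫ₛᵗ θ = (t - s) S - N (log θ(t) - log θ(s))`.

* Lower bound: `∫₀ᵗ θ ≥ 0` and `log θ(0) = log C - L k` give `t Sᵢ ≥ L (N k)ᵢ - O(1)` for each `i`
  as long as `θ(t)` is bounded below, hence at every time at which `θ(t)` is near `S`.
* Upper bound: for small `ε` the drift `r - M θ` is positive at time `0`. It solves a cooperative
  linear system along the solution, so it stays positive. Hence each `θᵢ` is nondecreasing and
  bounded by `Sᵢ`, and `∫ₛᵗ θᵢ ≤ (t - s) θᵢ(t)`. With `s = 0` the identity bounds `θ` away from `0`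
  at time `b L` for every `b > maxᵢ (N k)ᵢ / Sᵢ`; restarting from `s = b L`, it gives
  `θ(a L) → S` for every `a > b`.
-/

open Set Filter Topology

section Real

theorem tendsto_div_of_eventually_bounds {α : Type*} {l : Filter α} {f g : α → ℝ} {T B : ℝ}
    (hg : Tendsto g l atTop) (hlower : ∀ᶠ x in l, T * g x - B ≤ f x)
    (hupper : ∀ a > T, ∀ᶠ x in l, f x ≤ a * g x) :
    Tendsto (fun x => f x / g x) l (𝓝 T) := by
  refine tendsto_order.2 ⟨fun a ha => ?_, fun a ha => ?_⟩
  · filter_upwards [hlower, hg.eventually_gt_atTop 0,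
      (hg.const_mul_atTop (sub_pos.2 ha)).eventually_gt_atTop B] with x hf hpos hB
    rw [lt_div_iff₀ hpos]
    linarith
  · obtain ⟨b, hTb, hba⟩ := exists_between ha
    filter_upwards [hupper b hTb, hg.eventually_gt_atTop 0] with x hf hpos
    exact ((div_le_iff₀ hpos).2 hf).trans_lt hba

theorem tendsto_log_one_div_nhdsGT_zero :
    Tendsto (fun ε : ℝ => Real.log (1 / ε)) (𝓝[>] 0) atTop := by
  simp only [one_div]
  exact Real.tendsto_log_atTop.comp tendsto_inv_nhdsGT_zero

theorem mul_exp_le_of_mul_le_deriv {f f' : ℝ → ℝ} {K T : ℝ} (hT : 0 ≤ T)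
    (hf : ∀ t ∈ Icc 0 T, HasDerivAt f (f' t) t) (hK : ∀ t ∈ Ico 0 T, K * f t ≤ f' t) :
    f 0 * Real.exp (K * T) ≤ f T := by
  have h := le_gronwallBound_of_liminf_deriv_right_le (f := -f) (f' := -f') (δ := -f 0) (K := K)
    (ε := 0) (fun t ht => (hf t ht).neg.continuousAt.continuousWithinAt)
    (fun t ht _ => (hf t (Ico_subset_Icc_self ht)).neg.hasDerivWithinAt.liminf_right_slope_le)
    le_rfl (fun t ht => by simpa using hK t ht) T (right_mem_Icc.2 hT)
  rw [gronwallBound_ε0, sub_zero, Pi.neg_apply] at h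
  linarith

theorem exists_first_nonpos {ι : Type*} [Finite ι] {u : ℝ → ι → ℝ}
    (hu : ∀ i, ContinuousOn (fun t => u t i) (Ici 0)) {t : ℝ} (ht : 0 ≤ t) {i : ι}
    (hi : u t i ≤ 0) :
    ∃ T ≥ 0, (∃ j, u T j ≤ 0) ∧ ∀ s ∈ Ico 0 T, ∀ j, 0 < u s j := by
  let Z : Set ℝ := ⋃ j, Ici 0 ∩ (fun s => u s j) ⁻¹' Iic 0
  have hclosed : IsClosed Z := isClosed_iUnion_of_finite fun j =>
    (hu j).preimage_isClosed_of_isClosed isClosed_Ici isClosed_Iic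
  have hbdd : BddBelow Z := ⟨0, fun s hs => (mem_iUnion.1 hs).elim fun _ h => h.1⟩
  obtain ⟨j, hT, hj⟩ := mem_iUnion.1 (hclosed.csInf_mem ⟨t, mem_iUnion.2 ⟨i, ht, hi⟩⟩ hbdd)
  refine ⟨sInf Z, hT, ⟨j, hj⟩, fun s hs l => ?_⟩
  by_contra hl
  exact (csInf_le hbdd (mem_iUnion.2 ⟨l, hs.1, not_lt.1 hl⟩)).not_gt hs.2

/-- The hitting time of the set `K` by the path `x`; the junk value is `0` when `K` is never
reached. -/
noncomputable def hittingTime {E : Type*} (x : ℝ → E) (K : Set E) : ℝ :=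
  sInf {t | 0 ≤ t ∧ x t ∈ K}

theorem hittingTime_le {E : Type*} {x : ℝ → E} {K : Set E} {t : ℝ} (ht : 0 ≤ t)
    (hx : x t ∈ K) : hittingTime x K ≤ t :=
  csInf_le ⟨0, fun _ hs => hs.1⟩ ⟨ht, hx⟩

theorem le_hittingTime {E : Type*} {x : ℝ → E} {K : Set E} {s t : ℝ} (ht : 0 ≤ t)
    (hx : x t ∈ K) (hs : ∀ u ≥ 0, x u ∈ K → s ≤ u) : s ≤ hittingTime x K :=
  le_csInf ⟨t, ht, hx⟩ fun u hu => hs u hu.1 hu.2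

end Real

section Vector

variable {ι : Type*} [Fintype ι]

theorem abs_apply_sub_le_sqrt_sum_sq (x y : ι → ℝ) (i : ι) :
    |x i - y i| ≤ √(∑ j, (x j - y j) ^ 2) :=
  Real.abs_le_sqrt (Finset.single_le_sum (f := fun j => (x j - y j) ^ 2)
    (fun _ _ => sq_nonneg _) (Finset.mem_univ i))

theorem setOf_sqrt_sum_sq_le_mem_nhds (y : ι → ℝ) {η : ℝ} (hη : 0 < η) :
    {x : ι → ℝ | √(∑ i, (x i - y i) ^ 2) ≤ η} ∈ 𝓝 y := by
  have hcont : Continuous fun x : ι → ℝ => √(∑ i, (x i - y i) ^ 2) := by fun_prop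
  exact hcont.continuousAt.eventually_le_const (by simpa using hη)

theorem exists_closedBall_bounded_below [Nonempty ι] {y : ι → ℝ} (hy : ∀ i, 0 < y i) :
    ∃ η₀ > 0, ∃ c : ι → ℝ, (∀ i, 0 < c i) ∧
      ∀ η ≤ η₀, ∀ x ∈ {x : ι → ℝ | √(∑ i, (x i - y i) ^ 2) ≤ η}, ∀ i, c i ≤ x i := by
  obtain ⟨m, hm⟩ := Finite.exists_min y
  refine ⟨y m / 2, half_pos (hy m), fun i => y i / 2, fun i => half_pos (hy i),
    fun η hη x hx i => ?_⟩
  have hdist : |x i - y i| ≤ η := (abs_apply_sub_le_sqrt_sum_sq x y i).trans hx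
  linarith [(abs_le.1 hdist).1, hm i]

theorem hasDerivAt_mulVec_apply (A : Matrix ι ι ℝ) {x : ℝ → ι → ℝ} {x' : ι → ℝ} {t : ℝ}
    (hx : ∀ j, HasDerivAt (fun s => x s j) (x' j) t) (i : ι) :
    HasDerivAt (fun s => (A *ᵥ x s) i) ((A *ᵥ x') i) t :=
  HasDerivAt.fun_sum fun j _ => (hx j).const_mul (A i j)

theorem mul_apply_le_mulVec_apply {A : Matrix ι ι ℝ} {x : ι → ℝ} {i : ι}
    (hA : ∀ j, i ≠ j → 0 ≤ A i j) (hx : ∀ j, 0 ≤ x j) : A i i * x i ≤ (A *ᵥ x) i := by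
  classical
  rw [mulVec, dotProduct, ← Finset.add_sum_erase _ _ (Finset.mem_univ i)]
  exact le_add_of_nonneg_right <| Finset.sum_nonneg fun j hj =>
    mul_nonneg (hA j (Finset.ne_of_mem_erase hj).symm) (hx j)

theorem pos_of_cooperative_linear_ode {u : ℝ → ι → ℝ} {A : ℝ → Matrix ι ι ℝ}
    (hdiag : ∀ i, ContinuousOn (fun t => A t i i) (Ici 0))
    (hoff : ∀ t ≥ 0, ∀ i j, i ≠ j → 0 ≤ A t i j)
    (hu : ∀ t ≥ 0, ∀ i, HasDerivAt (fun s => u s i) ((A t *ᵥ u t) i) t)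
    (hu0 : ∀ i, 0 < u 0 i) {t : ℝ} (ht : 0 ≤ t) (i : ι) : 0 < u t i := by
  by_contra hi
  obtain ⟨T, hT, ⟨j, hj⟩, hpos⟩ := exists_first_nonpos
    (fun i s hs => (hu s hs i).continuousAt.continuousWithinAt) ht (not_lt.1 hi)
  obtain ⟨K, hK⟩ := isCompact_Icc.bddBelow_image
    ((hdiag j).mono (Icc_subset_Ici_self : Icc 0 T ⊆ Ici 0))
  have hgrowth : ∀ s ∈ Ico 0 T, K * u s j ≤ (A s *ᵥ u s) j := fun s hs =>
    calc K * u s j ≤ A s j j * u s j := mul_le_mul_of_nonneg_right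
          (hK (mem_image_of_mem _ (Ico_subset_Icc_self hs))) (hpos s hs j).le
      _ ≤ (A s *ᵥ u s) j :=
          mul_apply_le_mulVec_apply (hoff s hs.1 j) fun l => (hpos s hs l).le
  have hle := mul_exp_le_of_mul_le_deriv hT (fun s hs => hu s hs.1 j) hgrowth
  exact ((mul_pos (hu0 j) (Real.exp_pos _)).trans_le hle).not_ge hj

end Vector

/-- Nonsingular M-matrices: the off-diagonal entries are nonpositive and the matrix is monotone,
which for a real square matrix means that it is invertible with an entrywise nonnegative
inverse. -/
structure IsMMatrix {ι : Type*} [Fintype ι] (M : Matrix ι ι ℝ) : Prop where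
  offDiag_nonpos : ∀ i j, i ≠ j → M i j ≤ 0
  nonneg_of_mulVec_nonneg : ∀ v, 0 ≤ M *ᵥ v → 0 ≤ v

namespace IsMMatrix

variable {ι : Type*} [Fintype ι] {M : Matrix ι ι ℝ}

theorem negPart_dotProduct_mulVec_posPart_nonpos (hM : ∀ i j, i ≠ j → M i j ≤ 0) (v : ι → ℝ) :
    v⁻ ⬝ᵥ (M *ᵥ v⁺) ≤ 0 := by
  simp only [dotProduct, mulVec, Finset.mul_sum]
  refine Finset.sum_nonpos fun i _ => Finset.sum_nonpos fun j _ => ?_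
  obtain rfl | hij := eq_or_ne i j
  · rcases le_total (v i) 0 with h | h
    · simp [posPart_eq_zero.2 h]
    · simp [negPart_eq_zero.2 h]
  · exact mul_nonpos_of_nonneg_of_nonpos (negPart_nonneg (v i))
      (mul_nonpos_of_nonpos_of_nonneg (hM i j hij) (posPart_nonneg (v j)))

theorem of_posSemidef (hpsd : M.PosSemidef) (hoff : ∀ i j, i ≠ j → M i j ≤ 0) {r : ι → ℝ}
    (hr : ∀ i, 0 < r i) (hker : ∀ w, M *ᵥ w = 0 → r ⬝ᵥ w = 0) : IsMMatrix M := by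
  refine ⟨hoff, fun v hv => negPart_eq_zero.1 ?_⟩
  have hneg : 0 ≤ v⁻ := negPart_nonneg v
  have hquad : v⁻ ⬝ᵥ (M *ᵥ v⁻) = 0 := by
    refine le_antisymm ?_ (hpsd.dotProduct_mulVec_nonneg v⁻)
    have hsplit : v⁻ ⬝ᵥ (M *ᵥ v) = v⁻ ⬝ᵥ (M *ᵥ v⁺) - v⁻ ⬝ᵥ (M *ᵥ v⁻) := by
      rw [← dotProduct_sub, ← mulVec_sub, posPart_sub_negPart]
    linarith [dotProduct_nonneg_of_nonneg hneg hv, negPart_dotProduct_mulVec_posPart_nonpos hoff v]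
  have hr_neg : r ⬝ᵥ v⁻ = 0 := hker _ ((hpsd.dotProduct_mulVec_zero_iff _).1 hquad)
  have hterm := (Finset.sum_eq_zero_iff_of_nonneg
    fun i _ => mul_nonneg (hr i).le (hneg i)).1 hr_neg
  exact funext fun i => (mul_eq_zero.1 (hterm i (Finset.mem_univ i))).resolve_left (hr i).ne'

theorem of_gram {κ : Type*} [Fintype κ] (X : Matrix κ ι ℝ) (y : κ → ℝ)
    (hr : ∀ i, 0 < (Xᵀ *ᵥ y) i) (hoff : ∀ i j, i ≠ j → (Xᵀ * X) i j ≤ 0) :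
    IsMMatrix (Xᵀ * X) := by
  rw [← conjTranspose_eq_transpose_of_trivial] at hoff ⊢
  refine of_posSemidef (posSemidef_conjTranspose_mul_self X) hoff hr fun w hw => ?_
  rw [mulVec_transpose, ← dotProduct_mulVec, (conjTranspose_mul_self_mulVec_eq_zero X w).1 hw,
    dotProduct_zero]

variable [DecidableEq ι]

theorem isUnit_det (hM : IsMMatrix M) : IsUnit M.det := by
  rw [← isUnit_iff_isUnit_det, ← mulVec_injective_iff_isUnit]
  have hle : ∀ v w : ι → ℝ, M *ᵥ v = M *ᵥ w → v ≤ w := fun v w hvw =>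
    sub_nonneg.1 (hM.nonneg_of_mulVec_nonneg _ (by rw [mulVec_sub, hvw, sub_self]))
  exact fun v w hvw => le_antisymm (hle v w hvw) (hle w v hvw.symm)

theorem mulVec_inv_mulVec (hM : IsMMatrix M) (a : ι → ℝ) : M *ᵥ (M⁻¹ *ᵥ a) = a := by
  rw [mulVec_mulVec, mul_nonsing_inv M hM.isUnit_det, one_mulVec]

theorem inv_mulVec_mulVec (hM : IsMMatrix M) (a : ι → ℝ) : M⁻¹ *ᵥ (M *ᵥ a) = a := by
  rw [mulVec_mulVec, nonsing_inv_mul M hM.isUnit_det, one_mulVec]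

theorem inv_mulVec_mono (hM : IsMMatrix M) : Monotone (M⁻¹ *ᵥ ·) := fun a b hab => by
  refine sub_nonneg.1 (hM.nonneg_of_mulVec_nonneg _ ?_)
  simpa only [mulVec_sub, hM.mulVec_inv_mulVec] using sub_nonneg.2 hab

theorem inv_mulVec_pos (hM : IsMMatrix M) {a : ι → ℝ} (ha : ∀ i, 0 < a i) (i : ι) :
    0 < (M⁻¹ *ᵥ a) i := by
  have hnonneg : 0 ≤ M⁻¹ *ᵥ a := by
    simpa only [mulVec_zero] using hM.inv_mulVec_mono (show 0 ≤ a from fun i => (ha i).le)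
  refine (hnonneg i).lt_of_ne' fun hzero => (ha i).not_ge ?_
  have hrow := mul_apply_le_mulVec_apply (A := -M) (i := i)
    (fun j hij => neg_nonneg.2 (hM.offDiag_nonpos i j hij)) hnonneg
  rw [neg_mulVec, hM.mulVec_inv_mulVec, hzero, Pi.zero_apply, mul_zero] at hrow
  exact neg_nonneg.1 hrow

end IsMMatrix

/-- Solutions on `[0, ∞)` of the DLN ODE `θᵢ' = θᵢ (r - M θ)ᵢ`. -/
def IsDLNSolution {ι : Type*} [Fintype ι] (M : Matrix ι ι ℝ) (r : ι → ℝ) (θ : ℝ → ι → ℝ) : Prop :=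
  ∀ t ≥ 0, ∀ i, HasDerivAt (fun s => θ s i) (θ t i * (r i - (M *ᵥ θ t) i)) t

namespace IsDLNSolution

variable {ι : Type*} [Fintype ι] {M : Matrix ι ι ℝ} {r : ι → ℝ} {θ : ℝ → ι → ℝ}

theorem continuousOn (hθ : IsDLNSolution M r θ) (i : ι) :
    ContinuousOn (fun t => θ t i) (Ici 0) :=
  fun t ht => (hθ t ht i).continuousAt.continuousWithinAt

theorem pos (hθ : IsDLNSolution M r θ) (h0 : ∀ i, 0 < θ 0 i) {t : ℝ} (ht : 0 ≤ t) (i : ι) :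
    0 < θ t i := by
  classical
  refine pos_of_cooperative_linear_ode (A := fun t => diagonal (r - M *ᵥ θ t)) (fun i => ?_)
    (fun _ _ _ _ hij => (diagonal_apply_ne _ hij).ge) (fun t ht i => ?_) h0 ht i
  · simp only [diagonal_apply_eq, Pi.sub_apply]
    exact continuousOn_const.sub <|
      continuousOn_finsetSum _ fun j _ => (hθ.continuousOn j).const_mul _
  · rw [mulVec_diagonal, mul_comm]
    exact hθ t ht i

theorem drift_pos (hθ : IsDLNSolution M r θ) (hoff : ∀ i j, i ≠ j → M i j ≤ 0)
    (h0 : ∀ i, 0 < θ 0 i) (hsmall : ∀ i, (M *ᵥ θ 0) i < r i) {t : ℝ} (ht : 0 ≤ t) (i : ι) :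
    0 < r i - (M *ᵥ θ t) i := by
  refine pos_of_cooperative_linear_ode (u := fun t i => r i - (M *ᵥ θ t) i)
    (A := fun t => of fun i j => -M i j * θ t j) (fun i => (hθ.continuousOn i).const_mul _)
    (fun t ht i j hij => mul_nonneg (neg_nonneg.2 (hoff i j hij)) (hθ.pos h0 ht j).le)
    (fun t ht i => ?_) (fun i => sub_pos.2 (hsmall i)) ht i
  refine ((hasDerivAt_mulVec_apply M (hθ t ht) i).const_sub (r i)).congr_deriv ?_
  simp only [mulVec, dotProduct, of_apply, ← Finset.sum_neg_distrib, neg_mul, mul_assoc]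

theorem monotoneOn (hθ : IsDLNSolution M r θ) (hoff : ∀ i j, i ≠ j → M i j ≤ 0)
    (h0 : ∀ i, 0 < θ 0 i) (hsmall : ∀ i, (M *ᵥ θ 0) i < r i) (i : ι) :
    MonotoneOn (fun t => θ t i) (Ici 0) :=
  monotoneOn_of_hasDerivWithinAt_nonneg (convex_Ici 0) (hθ.continuousOn i)
    (fun t ht => (hθ t (interior_subset ht) i).hasDerivWithinAt) fun _ ht =>
      mul_nonneg (hθ.pos h0 (interior_subset ht) i).le
        (hθ.drift_pos hoff h0 hsmall (interior_subset ht) i).le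

theorem hasDerivAt_log (hθ : IsDLNSolution M r θ) (h0 : ∀ i, 0 < θ 0 i) {t : ℝ} (ht : 0 ≤ t)
    (i : ι) : HasDerivAt (fun s => Real.log (θ s i)) (r i - (M *ᵥ θ t) i) t :=
  ((hθ t ht i).log (hθ.pos h0 ht i).ne').congr_deriv
    (mul_div_cancel_left₀ _ (hθ.pos h0 ht i).ne')

variable [DecidableEq ι]

theorem le_equilibrium (hθ : IsDLNSolution M r θ) (hM : IsMMatrix M) (h0 : ∀ i, 0 < θ 0 i)
    (hsmall : ∀ i, (M *ᵥ θ 0) i < r i) {t : ℝ} (ht : 0 ≤ t) : θ t ≤ M⁻¹ *ᵥ r := by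
  have hdrift : M *ᵥ θ t ≤ r := fun i =>
    (sub_pos.1 (hθ.drift_pos hM.offDiag_nonpos h0 hsmall ht i)).le
  simpa only [hM.inv_mulVec_mulVec] using hM.inv_mulVec_mono hdrift

theorem integral_eq (hθ : IsDLNSolution M r θ) (hM : IsUnit M.det) (h0 : ∀ i, 0 < θ 0 i)
    {s t : ℝ} (hs : 0 ≤ s) (hst : s ≤ t) (i : ι) :
    ∫ τ in s..t, θ τ i =
      (M⁻¹ *ᵥ r) i * (t - s) - (M⁻¹ *ᵥ (Real.log ∘ θ t - Real.log ∘ θ s)) i := by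
  have hderiv : ∀ τ ∈ uIcc s t, HasDerivAt
      (fun τ => (M⁻¹ *ᵥ r) i * τ - (M⁻¹ *ᵥ (Real.log ∘ θ τ)) i) (θ τ i) τ := by
    intro τ hτ
    rw [uIcc_of_le hst] at hτ
    refine (((hasDerivAt_id τ).const_mul _).sub (hasDerivAt_mulVec_apply M⁻¹
      (fun j => hθ.hasDerivAt_log h0 (hs.trans hτ.1) j) i)).congr_deriv ?_
    have hsolve : M⁻¹ *ᵥ (r - M *ᵥ θ τ) = M⁻¹ *ᵥ r - θ τ := by
      rw [mulVec_sub, mulVec_mulVec, nonsing_inv_mul M hM, one_mulVec]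
    change _ - (M⁻¹ *ᵥ (r - M *ᵥ θ τ)) i = _
    rw [hsolve, Pi.sub_apply, mul_one, sub_sub_cancel]
  have hint : IntervalIntegrable (fun τ => θ τ i) MeasureTheory.volume s t :=
    ((hθ.continuousOn i).mono ((uIcc_of_le hst).trans_subset
      fun τ hτ => hs.trans hτ.1)).intervalIntegrable
  rw [intervalIntegral.integral_eq_sub_of_hasDerivAt hderiv hint, mulVec_sub, Pi.sub_apply]
  ring

theorem inv_mulVec_log_sub_le (hθ : IsDLNSolution M r θ) (hM : IsMMatrix M)
    (h0 : ∀ i, 0 < θ 0 i) {t : ℝ} (ht : 0 ≤ t) {c : ι → ℝ} (hc : ∀ i, 0 < c i)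
    (hct : c ≤ θ t) (i : ι) :
    (M⁻¹ *ᵥ (Real.log ∘ c - Real.log ∘ θ 0)) i ≤ (M⁻¹ *ᵥ r) i * t := by
  have hlog : Real.log ∘ c ≤ Real.log ∘ θ t := fun j => Real.log_le_log (hc j) (hct j)
  have hint := hθ.integral_eq hM.isUnit_det h0 le_rfl ht i
  have hnonneg : 0 ≤ ∫ τ in 0..t, θ τ i :=
    intervalIntegral.integral_nonneg ht fun τ hτ => (hθ.pos h0 hτ.1 i).le
  have hmono := hM.inv_mulVec_mono (sub_le_sub_right hlog (Real.log ∘ θ 0)) i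
  linarith

theorem equilibrium_sub_div_le (hθ : IsDLNSolution M r θ) (hM : IsMMatrix M)
    (h0 : ∀ i, 0 < θ 0 i) (hsmall : ∀ i, (M *ᵥ θ 0) i < r i) {s t : ℝ} (hs : 0 ≤ s) (hst : s < t)
    {c : ι → ℝ} (hc : ∀ i, 0 < c i) (hcs : c ≤ θ s) (i : ι) :
    (M⁻¹ *ᵥ r) i - (M⁻¹ *ᵥ (Real.log ∘ (M⁻¹ *ᵥ r) - Real.log ∘ c)) i / (t - s) ≤ θ t i := by
  have ht : 0 ≤ t := hs.trans hst.le
  have hlog_s : Real.log ∘ c ≤ Real.log ∘ θ s := fun j => Real.log_le_log (hc j) (hcs j)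
  have hlog_t : Real.log ∘ θ t ≤ Real.log ∘ (M⁻¹ *ᵥ r) := fun j =>
    Real.log_le_log (hθ.pos h0 ht j) (hθ.le_equilibrium hM h0 hsmall ht j)
  have hint := hθ.integral_eq hM.isUnit_det h0 hs hst.le i
  have hle : ∫ τ in s..t, θ τ i ≤ θ t i * (t - s) := by
    have hmono : ∀ τ ∈ Icc s t, θ τ i ≤ θ t i := fun τ hτ =>
      hθ.monotoneOn hM.offDiag_nonpos h0 hsmall i (hs.trans hτ.1) ht hτ.2
    have hcont : ContinuousOn (fun τ => θ τ i) (uIcc s t) :=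
      (hθ.continuousOn i).mono ((uIcc_of_le hst.le).trans_subset fun τ hτ => hs.trans hτ.1)
    calc ∫ τ in s..t, θ τ i ≤ ∫ _ in s..t, θ t i := intervalIntegral.integral_mono_on hst.le
          hcont.intervalIntegrable intervalIntegrable_const hmono
      _ = θ t i * (t - s) := by rw [intervalIntegral.integral_const, smul_eq_mul, mul_comm]
  have hmono := hM.inv_mulVec_mono (sub_le_sub hlog_t hlog_s) i
  rw [sub_le_iff_le_add, ← sub_le_iff_le_add', le_div_iff₀ (sub_pos.2 hst)]
  linarith

end IsDLNSolution

/-- Families of solutions of the DLN ODE, indexed by the initialization scale `ε ∈ (0, 1]`, that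
start at `(Cᵢ ε ^ kᵢ)ᵢ`. -/
structure IsDLNFamily {ι : Type*} [Fintype ι] (M : Matrix ι ι ℝ) (r C k : ι → ℝ)
    (θ : ℝ → ℝ → ι → ℝ) : Prop where
  isDLNSolution : ∀ ε ∈ Ioc (0 : ℝ) 1, IsDLNSolution M r (θ ε)
  initial : ∀ ε ∈ Ioc (0 : ℝ) 1, ∀ i, θ ε 0 i = C i * ε ^ k i

namespace IsDLNFamily

variable {ι : Type*} [Fintype ι] {M : Matrix ι ι ℝ} {r C k : ι → ℝ} {θ : ℝ → ℝ → ι → ℝ}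

theorem initial_pos (hθ : IsDLNFamily M r C k θ) (hC : ∀ i, 0 < C i) {ε : ℝ} (hε : ε ∈ Ioc 0 1)
    (i : ι) : 0 < θ ε 0 i := by
  rw [hθ.initial ε hε]
  exact mul_pos (hC i) (Real.rpow_pos_of_pos hε.1 _)

theorem log_initial (hθ : IsDLNFamily M r C k θ) (hC : ∀ i, 0 < C i) {ε : ℝ}
    (hε : ε ∈ Ioc 0 1) : Real.log ∘ θ ε 0 = Real.log ∘ C - Real.log (1 / ε) • k := by
  funext i
  have hrpow : ε ^ k i ≠ 0 := (Real.rpow_pos_of_pos hε.1 _).ne'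
  simp only [Function.comp_apply, hθ.initial ε hε, Real.log_mul (hC i).ne' hrpow,
    Real.log_rpow hε.1, one_div, Real.log_inv, Pi.sub_apply, Pi.smul_apply, smul_eq_mul]
  ring

theorem inv_mulVec_log_sub_log_initial [DecidableEq ι] (hθ : IsDLNFamily M r C k θ)
    (hC : ∀ i, 0 < C i) {ε : ℝ} (hε : ε ∈ Ioc 0 1) (x : ι → ℝ) (i : ι) :
    (M⁻¹ *ᵥ (Real.log ∘ x - Real.log ∘ θ ε 0)) i =
      (M⁻¹ *ᵥ (Real.log ∘ x - Real.log ∘ C)) i + Real.log (1 / ε) * (M⁻¹ *ᵥ k) i := by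
  rw [hθ.log_initial hC hε, ← sub_add, mulVec_add, mulVec_smul, Pi.add_apply, Pi.smul_apply,
    smul_eq_mul]

theorem tendsto_initial (hθ : IsDLNFamily M r C k θ) (hk : ∀ i, 0 < k i) :
    Tendsto (fun ε => θ ε 0) (𝓝[>] 0) (𝓝 0) := by
  refine tendsto_pi_nhds.2 fun i => ?_
  have hrpow : Tendsto (fun ε : ℝ => C i * ε ^ k i) (𝓝[>] 0) (𝓝 0) := by
    have h := ((Real.continuousAt_rpow_const 0 (k i) (.inr (hk i).le)).const_mul (C i)).tendsto
    rw [Real.zero_rpow (hk i).ne', mul_zero] at h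
    exact h.mono_left nhdsWithin_le_nhds
  refine hrpow.congr' ?_
  filter_upwards [Ioc_mem_nhdsGT zero_lt_one] with ε hε using (hθ.initial ε hε i).symm

theorem eventually_mulVec_initial_lt (hθ : IsDLNFamily M r C k θ) (hr : ∀ i, 0 < r i)
    (hk : ∀ i, 0 < k i) : ∀ᶠ ε in 𝓝[>] 0, ∀ i, (M *ᵥ θ ε 0) i < r i := by
  refine eventually_all.2 fun i => ?_
  have hcont : Continuous fun x : ι → ℝ => (M *ᵥ x) i := by fun_prop
  have hlim := (hcont.tendsto 0).comp (hθ.tendsto_initial hk)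
  rw [mulVec_zero] at hlim
  exact hlim.eventually_lt_const (hr i)

variable [DecidableEq ι]

theorem eventually_le_apply_mul_log (hθ : IsDLNFamily M r C k θ) (hM : IsMMatrix M)
    (hr : ∀ i, 0 < r i) (hC : ∀ i, 0 < C i) (hk : ∀ i, 0 < k i) {b : ℝ} (hb : 0 < b) {i : ι}
    {c : ℝ} (hc : c < (M⁻¹ *ᵥ r) i - (M⁻¹ *ᵥ k) i / b) :
    ∀ᶠ ε in 𝓝[>] 0, c ≤ θ ε (b * Real.log (1 / ε)) i := by
  set A : ℝ := (M⁻¹ *ᵥ (Real.log ∘ (M⁻¹ *ᵥ r) - Real.log ∘ C)) i with hA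
  have hlim : Tendsto (fun ε => (M⁻¹ *ᵥ r) i - (M⁻¹ *ᵥ k) i / b - A / (b * Real.log (1 / ε)))
      (𝓝[>] 0) (𝓝 ((M⁻¹ *ᵥ r) i - (M⁻¹ *ᵥ k) i / b)) := by
    simpa only [sub_zero] using tendsto_const_nhds.sub
      ((tendsto_log_one_div_nhdsGT_zero.const_mul_atTop hb).const_div_atTop A)
  filter_upwards [Ioc_mem_nhdsGT zero_lt_one, hθ.eventually_mulVec_initial_lt hr hk,
    tendsto_log_one_div_nhdsGT_zero.eventually_gt_atTop 0, hlim.eventually_const_lt hc]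
    with ε hε hsmall hL hcε
  have h0 := hθ.initial_pos hC hε
  have hbound := (hθ.isDLNSolution ε hε).equilibrium_sub_div_le hM h0 hsmall le_rfl
    (mul_pos hb hL) h0 le_rfl i
  rw [hθ.inv_mulVec_log_sub_log_initial hC hε, ← hA, sub_zero, add_div,
    mul_comm b, mul_div_mul_left _ _ hL.ne', mul_comm _ b] at hbound
  linarith

theorem tendsto_apply_mul_log (hθ : IsDLNFamily M r C k θ) (hM : IsMMatrix M)
    (hr : ∀ i, 0 < r i) (hC : ∀ i, 0 < C i) (hk : ∀ i, 0 < k i) {a : ℝ}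
    (ha : ∀ i, (M⁻¹ *ᵥ k) i / (M⁻¹ *ᵥ r) i < a) :
    Tendsto (fun ε => θ ε (a * Real.log (1 / ε))) (𝓝[>] 0) (𝓝 (M⁻¹ *ᵥ r)) := by
  refine tendsto_pi_nhds.2 fun i => ?_
  have hS := hM.inv_mulVec_pos hr
  obtain ⟨b, hkb, hba : b < a⟩ := ((eventually_all.2 fun j =>
    (eventually_gt_nhds (ha j)).filter_mono nhdsWithin_le_nhds).and
      (self_mem_nhdsWithin : Iio a ∈ 𝓝[<] a)).exists
  have hb : 0 < b := (div_pos (hM.inv_mulVec_pos hk i) (hS i)).trans (hkb i)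
  let c : ι → ℝ := fun j => ((M⁻¹ *ᵥ r) j - (M⁻¹ *ᵥ k) j / b) / 2
  have hgap : ∀ j, 0 < (M⁻¹ *ᵥ r) j - (M⁻¹ *ᵥ k) j / b := fun j =>
    sub_pos.2 ((div_lt_comm₀ (hS j) hb).1 (hkb j))
  set D : ℝ := (M⁻¹ *ᵥ (Real.log ∘ (M⁻¹ *ᵥ r) - Real.log ∘ c)) i
  have hlim : Tendsto (fun ε => (M⁻¹ *ᵥ r) i - D / ((a - b) * Real.log (1 / ε))) (𝓝[>] 0)
      (𝓝 ((M⁻¹ *ᵥ r) i)) := by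
    simpa only [sub_zero] using tendsto_const_nhds.sub
      ((tendsto_log_one_div_nhdsGT_zero.const_mul_atTop (sub_pos.2 hba)).const_div_atTop D)
  have hbounds : ∀ᶠ ε in 𝓝[>] 0,
      (M⁻¹ *ᵥ r) i - D / ((a - b) * Real.log (1 / ε)) ≤ θ ε (a * Real.log (1 / ε)) i ∧
        θ ε (a * Real.log (1 / ε)) i ≤ (M⁻¹ *ᵥ r) i := by
    filter_upwards [Ioc_mem_nhdsGT zero_lt_one, hθ.eventually_mulVec_initial_lt hr hk,
      tendsto_log_one_div_nhdsGT_zero.eventually_gt_atTop 0, eventually_all.2 fun j =>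
        hθ.eventually_le_apply_mul_log hM hr hC hk hb (half_lt_self (hgap j))]
      with ε hε hsmall hL hcε
    have hsol := hθ.isDLNSolution ε hε
    have h0 := hθ.initial_pos hC hε
    constructor
    · rw [sub_mul]
      exact hsol.equilibrium_sub_div_le hM h0 hsmall (by positivity)
        (mul_lt_mul_of_pos_right hba hL) (fun j => half_pos (hgap j)) hcε i
    · exact hsol.le_equilibrium hM h0 hsmall (mul_nonneg (hb.trans hba).le hL.le) i
  exact tendsto_of_tendsto_of_tendsto_of_le_of_le' hlim tendsto_const_nhds
    (hbounds.mono fun _ h => h.1) (hbounds.mono fun _ h => h.2)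

theorem mul_log_sub_le_of_le_apply (hθ : IsDLNFamily M r C k θ) (hM : IsMMatrix M)
    (hr : ∀ i, 0 < r i) (hC : ∀ i, 0 < C i) {c : ι → ℝ} (hc : ∀ i, 0 < c i) {ε t : ℝ}
    (hε : ε ∈ Ioc 0 1) (ht : 0 ≤ t) (hct : c ≤ θ ε t) (i : ι) :
    (M⁻¹ *ᵥ k) i / (M⁻¹ *ᵥ r) i * Real.log (1 / ε) -
      (M⁻¹ *ᵥ (Real.log ∘ C - Real.log ∘ c)) i / (M⁻¹ *ᵥ r) i ≤ t := by
  have hbound := (hθ.isDLNSolution ε hε).inv_mulVec_log_sub_le hM (hθ.initial_pos hC hε) ht hc hct i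
  rw [hθ.inv_mulVec_log_sub_log_initial hC hε, ← neg_sub, mulVec_neg, Pi.neg_apply] at hbound
  rw [div_mul_eq_mul_div, ← sub_div, div_le_iff₀ (hM.inv_mulVec_pos hr i)]
  linarith

end IsDLNFamily

theorem dln_convergence_time_general {ι : Type*} [Fintype ι] [DecidableEq ι] [Nonempty ι]
    {M : Matrix ι ι ℝ} (hM : IsMMatrix M) {r C k : ι → ℝ} (hr : ∀ i, 0 < r i)
    (hC : ∀ i, 0 < C i) (hk : ∀ i, 0 < k i) {θ : ℝ → ℝ → ι → ℝ} (hθ : IsDLNFamily M r C k θ)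
    {K : Set (ι → ℝ)} (hK : K ∈ 𝓝 (M⁻¹ *ᵥ r)) {c : ι → ℝ} (hc : ∀ i, 0 < c i)
    (hcK : ∀ x ∈ K, ∀ i, c i ≤ x i) :
    Tendsto (fun ε => hittingTime (θ ε) K / Real.log (1 / ε)) (𝓝[>] 0)
      (𝓝 (⨆ i, (M⁻¹ *ᵥ k) i / (M⁻¹ *ᵥ r) i)) := by
  have hle_sup := le_ciSup (finite_range fun i => (M⁻¹ *ᵥ k) i / (M⁻¹ *ᵥ r) i).bddAbove
  obtain ⟨m, hm⟩ := exists_eq_ciSup_of_finite (f := fun i => (M⁻¹ *ᵥ k) i / (M⁻¹ *ᵥ r) i)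
  have hreach : ∀ a > ⨆ i, (M⁻¹ *ᵥ k) i / (M⁻¹ *ᵥ r) i, ∀ᶠ ε in 𝓝[>] 0,
      0 ≤ a * Real.log (1 / ε) ∧ θ ε (a * Real.log (1 / ε)) ∈ K := by
    intro a ha
    have ha' : ∀ i, (M⁻¹ *ᵥ k) i / (M⁻¹ *ᵥ r) i < a := fun i => (hle_sup i).trans_lt ha
    have ha0 : 0 < a := (div_pos (hM.inv_mulVec_pos hk m) (hM.inv_mulVec_pos hr m)).trans (ha' m)
    filter_upwards [tendsto_log_one_div_nhdsGT_zero.eventually_ge_atTop 0,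
      hθ.tendsto_apply_mul_log hM hr hC hk ha' hK] with ε hL hε using ⟨mul_nonneg ha0.le hL, hε⟩
  refine tendsto_div_of_eventually_bounds (B := (M⁻¹ *ᵥ (Real.log ∘ C - Real.log ∘ c)) m /
    (M⁻¹ *ᵥ r) m) tendsto_log_one_div_nhdsGT_zero ?_
    fun a ha => (hreach a ha).mono fun ε h => hittingTime_le h.1 h.2
  rw [← hm]
  filter_upwards [Ioc_mem_nhdsGT zero_lt_one, hreach _ (lt_add_one _)] with ε hε h
  exact le_hittingTime h.1 h.2 fun t ht hmem =>
    hθ.mul_log_sub_le_of_le_apply hM hr hC hc hε ht (hcK _ hmem) m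

/-- Corollary 2: Under (A1) and (A2), the hitting time `τ_η^{(ε)}` of the
Euclidean ball of radius `η` around the global minimizer `M⁻¹r` satisfies, for all
`η > 0` small enough, `τ_η^{(ε)} / log(1/ε) → maxᵢ (M⁻¹k)ᵢ / (M⁻¹r)ᵢ` as `ε → 0⁺`. -/
theorem dln_convergence_time (n d : ℕ) (hn : 0 < n) (hd : 0 < d)
    (X : Matrix (Fin n) (Fin d) ℝ) (y : Fin n → ℝ)
    (M : Matrix (Fin d) (Fin d) ℝ) (r : Fin d → ℝ)
    (hM : M = Xᵀ * X) (hr : r = Xᵀ *ᵥ y)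
    (hA1 : ∀ i, 0 < r i)
    (hA2 : ∀ i j, i ≠ j → M i j ≤ 0)
    (C k : Fin d → ℝ) (hC : ∀ i, 0 < C i) (hk : ∀ i, 0 < k i)
    (θ : ℝ → ℝ → Fin d → ℝ)
    (hθinit : ∀ ε ∈ Set.Ioc (0 : ℝ) 1, ∀ i, θ ε 0 i = C i * ε ^ k i)
    (hθode : ∀ ε ∈ Set.Ioc (0 : ℝ) 1, ∀ t ≥ (0 : ℝ), ∀ i,
      HasDerivAt (fun τ => θ ε τ i) (θ ε t i * (r i - (M *ᵥ θ ε t) i)) t) :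
    ∃ η₀ > (0 : ℝ), ∀ η ∈ Set.Ioc (0 : ℝ) η₀,
      Filter.Tendsto
        (fun ε =>
          sInf {t : ℝ | 0 ≤ t ∧
            Real.sqrt (∑ i, (θ ε t i - (M⁻¹ *ᵥ r) i) ^ 2) ≤ η} / Real.log (1 / ε))
        (nhdsWithin 0 (Set.Ioi 0))
        (nhds (⨆ i : Fin d, (M⁻¹ *ᵥ k) i / (M⁻¹ *ᵥ r) i)) := by
  subst hM hr
  have : Nonempty (Fin d) := ⟨⟨0, hd⟩⟩
  have hM := IsMMatrix.of_gram X y hA1 hA2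
  obtain ⟨η₀, hη₀, c, hc, hball⟩ := exists_closedBall_bounded_below (hM.inv_mulVec_pos hA1)
  refine ⟨η₀, hη₀, fun η hη => ?_⟩
  have hθ : IsDLNFamily (Xᵀ * X) (Xᵀ *ᵥ y) C k θ := ⟨hθode, hθinit⟩
  simpa only [hittingTime, mem_ofPred_eq] using dln_convergence_time_general hM hA1 hC hk hθ
    (setOf_sqrt_sum_sq_le_mem_nhds _ hη.1) hc (hball η hη.2)
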